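/- arXiv:1908.04714 — 2 statements merged into one kernel-verified Lean document; each statement's English description precedes it below -/
import Mathlib

section
/- Let q ∈ (0,∞) and μ ∈ (0,∞), and assume: λ = q + μ, ∑_{k=0}^∞ k p_k = μ/(q + μ), r_{−1} = 0, and r_k = ((q + μ)/μ)(k + 1) p_{k+1} for every k ∈ ℕ. Then ∑_{k=1}^∞ r_k = 1 (so r is a genuine immigration mechanism), φ* = 1, θ_q = 0, q + μ(1 − r̃(z)) = λ(1 − p̃′(z)) for all z ∈ (0,1), and Φ_q(x) = q/(λ p_0 (x + 1)) for every x ∈ ℕ₀; in particular Φ_q(x)/Φ_q(0) = 1/(x + 1). -/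
open MeasureTheory Filter Set

/-- The probability generating function of the offspring distribution `p`. -/
noncomputable def ptilde (p : ℕ → ℝ) (z : ℝ) : ℝ := ∑' k, p k * z ^ k

/-- The p.g.f. of the immigration/culling mechanism: `rneg` is `r_{-1}`,
`r k` for `k ≥ 1` are the immigration probabilities (we require `r 0 = 0`). -/
noncomputable def rtilde (rneg : ℝ) (r : ℕ → ℝ) (z : ℝ) : ℝ :=
  rneg / z + ∑' k, r k * z ^ k

/-- `f : ℕ → ℝ` is `q`-harmonic for the branching process with branching mechanism `p`
(rate `lam`) and immigration/culling mechanism `(rneg, r)` (rate `mu`). -/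
def IsQHarmonic (lam mu q : ℝ) (p : ℕ → ℝ) (rneg : ℝ) (r : ℕ → ℝ) (f : ℕ → ℝ) : Prop :=
  ∀ x : ℕ, 1 ≤ x →
    (q + lam * x + mu) * f x
      = lam * x * (∑' k, p k * f (x + k - 1))
        + mu * (rneg * f (x - 1) + ∑' k, r k * f (x + k))

/-- The harmonic function `Φ_q`; `φ` is the smallest fixed point of `ptilde p` in `(0,1]`
and `θ` is the delimiter `θ_q`. -/
noncomputable def Phi (lam mu : ℝ) (p : ℕ → ℝ) (rneg : ℝ) (r : ℕ → ℝ)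
    (φ θ q : ℝ) (x : ℕ) : ℝ :=
  q * ∫ v in (0:ℝ)..φ,
      Real.exp (-∫ w in θ..v,
          (q + mu * (1 - rtilde rneg r w)) / (lam * |ptilde p w - w|))
        / (lam * |ptilde p v - v|) * v ^ x

/-- The harmonic function `Ψ_q`. -/
noncomputable def Psi (lam mu : ℝ) (p : ℕ → ℝ) (rneg : ℝ) (r : ℕ → ℝ)
    (φ q : ℝ) (x : ℕ) : ℝ :=
  1 - q * ∫ v in φ..(1:ℝ),
      Real.exp (-∫ w in v..(1:ℝ),
          (q + mu * (1 - rtilde rneg r w)) / (lam * |ptilde p w - w|))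
        / (lam * |ptilde p v - v|) * v ^ x

/-- Condition (E'): `∫_v^1 dz/(z - ptilde p z) < ∞` for some `v ∈ (φ, 1)`. -/
def CondE (p : ℕ → ℝ) (φ : ℝ) : Prop :=
  ∃ v, φ < v ∧ v < 1 ∧
    IntervalIntegrable (fun z => 1 / (z - ptilde p z)) MeasureTheory.volume v 1

/-!
Since `r` is a multiple of the coefficient sequence of `p̃'`, with `λ = q + μ` the numerator of
`γ_q` becomes `λ (1 - p̃')`. The mean of `p` is below `1`, so Bernoulli's inequality gives
`z < p̃ z` on `[0, 1)`; hence `φ* = 1` and `γ_q = -(p̃ - id)' / (p̃ - id)` there.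
The exponential factor is then `(p̃ v - v) / p₀`, which cancels `ρ` up to a constant, and
`Φ_q` reduces to the integral of `v ^ x` over `[0, 1]`.
-/

theorem summable_of_tsum_ne_zero {ι M : Type*} [AddCommMonoid M] [TopologicalSpace M] {f : ι → M}
    (hf : ∑' i, f i ≠ 0) : Summable f :=
  not_imp_comm.1 tsum_eq_zero_of_not_summable hf

theorem tsum_succ_eq_tsum_of_zero {M : Type*} [AddCommMonoid M] [TopologicalSpace M] {f : ℕ → M}
    (hf : f 0 = 0) : ∑' k, f (k + 1) = ∑' k, f k :=
  Nat.succ_injective.tsum_eq fun k hk =>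
    ⟨k.pred, Nat.succ_pred_eq_of_ne_zero (by rintro rfl; exact hk hf)⟩

theorem exp_integral_deriv_div {g g' : ℝ → ℝ} {a b : ℝ}
    (hderiv : ∀ w ∈ uIcc a b, HasDerivAt g (g' w) w) (hcont : ContinuousOn g' (uIcc a b))
    (hpos : ∀ w ∈ uIcc a b, 0 < g w) :
    Real.exp (∫ w in a..b, g' w / g w) = g b / g a := by
  have hint : IntervalIntegrable (fun w => g' w / g w) volume a b :=
    (hcont.div (HasDerivAt.continuousOn hderiv) fun w hw => (hpos w hw).ne').intervalIntegrable
  rw [intervalIntegral.integral_eq_sub_of_hasDerivAt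
      (fun w hw => (hderiv w hw).log (hpos w hw).ne') hint,
    Real.exp_sub, Real.exp_log (hpos b right_mem_uIcc), Real.exp_log (hpos a left_mem_uIcc)]

/-- The coefficient sequence of the formal derivative of `∑ k, p k * z ^ k`, so that
`ptilde (derivCoeff p)` is the derivative of `ptilde p`. For an offspring distribution it is,
up to normalization, the law of a size-biased offspring number minus one. -/
def derivCoeff (p : ℕ → ℝ) (k : ℕ) : ℝ := (k + 1) * p (k + 1)

section GeneratingFunction

variable {p : ℕ → ℝ} {z : ℝ}

theorem summable_derivCoeff_iff :
    Summable (derivCoeff p) ↔ Summable fun k : ℕ => (k : ℝ) * p k := by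
  rw [← summable_nat_add_iff (f := fun k : ℕ => (k : ℝ) * p k) 1]
  simp only [Nat.cast_add_one]
  rfl

theorem tsum_derivCoeff (p : ℕ → ℝ) : ∑' k, derivCoeff p k = ∑' k : ℕ, (k : ℝ) * p k := by
  rw [← tsum_succ_eq_tsum_of_zero (f := fun k : ℕ => (k : ℝ) * p k) (by simp)]
  simp only [derivCoeff, Nat.cast_add_one]

theorem ptilde_zero (p : ℕ → ℝ) : ptilde p 0 = p 0 := by
  rw [ptilde, tsum_eq_single 0 fun k hk => by simp [hk]]
  simp

theorem ptilde_const_mul (c : ℝ) (p : ℕ → ℝ) (z : ℝ) :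
    ptilde (fun k => c * p k) z = c * ptilde p z := by
  simp only [ptilde, mul_assoc, tsum_mul_left]

theorem rtilde_zero_left (r : ℕ → ℝ) (z : ℝ) : rtilde 0 r z = ptilde r z := by
  simp only [rtilde, ptilde, zero_div, zero_add]

theorem abs_mul_pow_le_abs (a : ℝ) (hz : |z| ≤ 1) (n : ℕ) : |a * z ^ n| ≤ |a| := by
  rw [abs_mul, abs_pow]
  exact mul_le_of_le_one_right (abs_nonneg a) (pow_le_one₀ (abs_nonneg z) hz)

theorem continuousOn_ptilde (hp : Summable p) : ContinuousOn (ptilde p) (Icc (-1) 1) :=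
  continuousOn_tsum (fun k => by fun_prop) hp.abs
    fun k _ hz => abs_mul_pow_le_abs (p k) (abs_le.2 hz) k

theorem hasDerivAt_ptilde (hp : Summable (derivCoeff p)) (hz : z ∈ Ioo (-1) 1) :
    HasDerivAt (ptilde p) (ptilde (derivCoeff p) z) z := by
  have hterm : ∀ (k : ℕ) (y : ℝ), y ∈ Ioo (-1) 1 → ‖p k * (k * y ^ (k - 1))‖ ≤ |k * p k| := by
    intro k y hy
    rw [mul_left_comm, ← mul_assoc]
    exact abs_mul_pow_le_abs _ (abs_le.2 (Ioo_subset_Icc_self hy)) _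
  have hsummable_zero : Summable fun k => p k * (0 : ℝ) ^ k :=
    summable_of_ne_finset_zero (s := {0}) fun k hk => by simp_all
  have hderiv_eq : ∑' k : ℕ, p k * (k * z ^ (k - 1)) = ptilde (derivCoeff p) z := by
    rw [← tsum_succ_eq_tsum_of_zero (by simp), ptilde]
    refine tsum_congr fun k => ?_
    simp only [derivCoeff, Nat.cast_add_one, add_tsub_cancel_right]
    ring
  rw [← hderiv_eq]
  exact hasDerivAt_tsum_of_isPreconnected (summable_derivCoeff_iff.1 hp).abs isOpen_Ioo
    isPreconnected_Ioo (fun k y _ => (hasDerivAt_pow k y).const_mul (p k)) hterm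
    (by norm_num) hsummable_zero hz

theorem tsum_sub_ptilde_le (hp : ∀ k, 0 ≤ p k) (hsum : Summable p)
    (hmean : Summable (derivCoeff p)) (hz : z ∈ Icc (-1) 1) :
    ∑' k, p k - ptilde p z ≤ (∑' k, derivCoeff p k) * (1 - z) := by
  have hpow : Summable fun k => p k * z ^ k :=
    .of_norm_bounded hsum.abs fun k => abs_mul_pow_le_abs (p k) (abs_le.2 hz) k
  have hbernoulli (k : ℕ) : p k - p k * z ^ k ≤ k * p k * (1 - z) :=
    calc p k - p k * z ^ k
        ≤ p k - p k * (1 + k * (z - 1)) :=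
          sub_le_sub_left (mul_le_mul_of_nonneg_left (one_add_mul_sub_le_pow hz.1 k) (hp k)) _
      _ = k * p k * (1 - z) := by ring
  rw [tsum_derivCoeff, ptilde, ← hsum.tsum_sub hpow, ← tsum_mul_right]
  exact (hsum.sub hpow).tsum_le_tsum hbernoulli
    ((summable_derivCoeff_iff.1 hmean).mul_right _)

theorem lt_ptilde_of_mean_lt_one (hp : ∀ k, 0 ≤ p k) (hsum : HasSum p 1)
    (hmean : Summable (derivCoeff p)) (hmean_lt : ∑' k, derivCoeff p k < 1)
    (hz : z ∈ Ico (-1) 1) : z < ptilde p z := by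
  have hle := tsum_sub_ptilde_le hp hsum.summable hmean (Ico_subset_Icc_self hz)
  have hlt := mul_lt_of_lt_one_left (sub_pos.2 hz.2) hmean_lt
  rw [hsum.tsum_eq] at hle
  linarith

theorem eq_one_of_ptilde_eq_self (hp : ∀ k, 0 ≤ p k) (hsum : HasSum p 1)
    (hmean : Summable (derivCoeff p)) (hmean_lt : ∑' k, derivCoeff p k < 1)
    (hz : z ∈ Icc (-1) 1) (hfix : ptilde p z = z) : z = 1 :=
  hz.2.eq_of_not_lt fun hlt =>
    (lt_ptilde_of_mean_lt_one hp hsum hmean hmean_lt ⟨hz.1, hlt⟩).ne' hfix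

end GeneratingFunction

section Phi

variable {lam mu q rneg φ : ℝ} {p r : ℕ → ℝ}

theorem exp_neg_integral_gamma_eq_div (hlam : lam ≠ 0) (hp : Summable (derivCoeff p))
    (hφ : φ ≤ 1) (hpos : ∀ w ∈ Ico 0 φ, w < ptilde p w)
    (hnum : ∀ w ∈ Ioo 0 φ,
      q + mu * (1 - rtilde rneg r w) = lam * (1 - deriv (ptilde p) w))
    {v : ℝ} (hv : v ∈ Ico 0 φ) :
    Real.exp (-∫ w in (0 : ℝ)..v,
        (q + mu * (1 - rtilde rneg r w)) / (lam * |ptilde p w - w|))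
      = (ptilde p v - v) / p 0 := by
  have huIcc : uIcc 0 v ⊆ Ico 0 φ := by
    rw [uIcc_of_le hv.1]
    exact Icc_subset_Ico_right hv.2
  have hIoo : Ico 0 φ ⊆ Ioo (-1) 1 := fun w hw => ⟨by linarith [hw.1], hw.2.trans_le hφ⟩
  have hgamma : EqOn
      (fun w => -((q + mu * (1 - rtilde rneg r w)) / (lam * |ptilde p w - w|)))
      (fun w => (ptilde (derivCoeff p) w - 1) / (ptilde p w - w)) (Ioo 0 v) := by
    intro w hw
    have hwφ : w ∈ Ioo 0 φ := ⟨hw.1, hw.2.trans hv.2⟩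
    have hw' := Ioo_subset_Ico_self hwφ
    simp only [hnum w hwφ, (hasDerivAt_ptilde hp (hIoo hw')).deriv,
      abs_of_pos (sub_pos.2 (hpos w hw')), mul_div_mul_left _ _ hlam, ← neg_div, neg_sub]
  have hcont : ContinuousOn (fun w => ptilde (derivCoeff p) w - 1) (uIcc 0 v) :=
    ((continuousOn_ptilde hp).mono
      ((huIcc.trans hIoo).trans Ioo_subset_Icc_self)).sub continuousOn_const
  rw [← intervalIntegral.integral_neg, intervalIntegral.integral_congr_Ioo_of_le hv.1 hgamma,
    exp_integral_deriv_div (g := fun w => ptilde p w - w)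
      (fun w hw => (hasDerivAt_ptilde hp (hIoo (huIcc hw))).sub (hasDerivAt_id w)) hcont
      fun w hw => sub_pos.2 (hpos w (huIcc hw))]
  simp only [ptilde_zero, sub_zero]

theorem Phi_eq_of_gamma_numerator_eq (hlam : lam ≠ 0) (hp : Summable (derivCoeff p))
    (hφ0 : 0 ≤ φ) (hφ1 : φ ≤ 1) (hpos : ∀ w ∈ Ico 0 φ, w < ptilde p w)
    (hnum : ∀ w ∈ Ioo 0 φ,
      q + mu * (1 - rtilde rneg r w) = lam * (1 - deriv (ptilde p) w)) (x : ℕ) :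
    Phi lam mu p rneg r φ 0 q x = q * φ ^ (x + 1) / (lam * p 0 * (x + 1)) := by
  have hintegrand : EqOn
      (fun v => Real.exp (-∫ w in (0 : ℝ)..v,
          (q + mu * (1 - rtilde rneg r w)) / (lam * |ptilde p w - w|))
        / (lam * |ptilde p v - v|) * v ^ x)
      (fun v => (lam * p 0)⁻¹ * v ^ x) (Ioo 0 φ) := by
    intro v hv
    have hv' := Ioo_subset_Ico_self hv
    have hρ : 0 < ptilde p v - v := sub_pos.2 (hpos v hv')
    simp only [exp_neg_integral_gamma_eq_div hlam hp hφ1 hpos hnum hv', abs_of_pos hρ]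
    field_simp
  rw [Phi, intervalIntegral.integral_congr_Ioo_of_le hφ0 hintegrand,
    intervalIntegral.integral_const_mul, integral_pow]
  simp only [ne_eq, Nat.add_eq_zero_iff, one_ne_zero, and_false, not_false_eq_true, zero_pow,
    sub_zero]
  field_simp

end Phi

section Immigration

variable {mu q : ℝ} {p r : ℕ → ℝ}

theorem eq_const_mul_derivCoeff (c : ℝ) (hp1 : p 1 = 0) (hr0 : r 0 = 0)
    (hr : ∀ k : ℕ, 1 ≤ k → r k = c * (k + 1) * p (k + 1)) :
    r = fun k => c * derivCoeff p k := by
  funext k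
  rcases k.eq_zero_or_pos with rfl | hk
  · simp [derivCoeff, hp1, hr0]
  · rw [hr k hk, derivCoeff, mul_assoc]

theorem gamma_numerator_eq_mul_one_sub_deriv (hmu : mu ≠ 0) (hp : Summable (derivCoeff p)) {z : ℝ}
    (hz : z ∈ Ioo (-1) 1) :
    q + mu * (1 - rtilde 0 (fun k => (q + mu) / mu * derivCoeff p k) z)
      = (q + mu) * (1 - deriv (ptilde p) z) := by
  rw [rtilde_zero_left, ptilde_const_mul, (hasDerivAt_ptilde hp hz).deriv]
  field_simp
  ring

end Immigration

/-- under the stated relations between `λ, μ, q, p, r`, one has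
`∑_{k≥1} r_k = 1`, `φ* = 1`, `θ_q = 0`, `q + μ(1 - r̃(z)) = λ(1 - p̃'(z))` on `(0,1)`, and
`Φ_q(x) = q/(λ p_0 (x+1))`; in particular `Φ_q(x)/Φ_q(0) = 1/(x+1)`. -/
theorem stmt12 (lam mu rneg : ℝ) (p r : ℕ → ℝ) (φ q θq : ℝ)
    (hlam : 0 < lam)
    (hp : ∀ k, 0 ≤ p k) (hpsum : ∑' k, p k = 1) (hp0 : 0 < p 0) (hp1 : p 1 = 0)
    (hφ0 : 0 < φ) (hφ1 : φ ≤ 1) (hφfix : ptilde p φ = φ)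
    (hφlo : ∀ z : ℝ, 0 < z → z < φ → z < ptilde p z)
    (hφhi : ∀ z : ℝ, φ < z → z < 1 → ptilde p z < z)
    (hr : ∀ k, 0 ≤ r k) (hr0 : r 0 = 0)
    (hq : 0 < q) (hmu : 0 < mu)
    (hlameq : lam = q + mu)
    (hmean : ∑' k : ℕ, (k : ℝ) * p k = mu / (q + mu))
    (hrneg : rneg = 0)
    (hrdef : ∀ k : ℕ, 1 ≤ k → r k = ((q + mu) / mu) * (k + 1) * p (k + 1))
    -- characterization of `θ_q`
    (hθpos : 0 < mu * rneg →
      θq ∈ Set.Ioo (0:ℝ) 1 ∧ q = mu * (rtilde rneg r θq - 1))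
    (hθzero : mu * rneg = 0 → θq = 0) :
    (∑' k : ℕ, r k = 1) ∧
    φ = 1 ∧
    θq = 0 ∧
    (∀ z ∈ Set.Ioo (0:ℝ) 1,
      q + mu * (1 - rtilde rneg r z) = lam * (1 - deriv (ptilde p) z)) ∧
    (∀ x : ℕ, Phi lam mu p rneg r φ θq q x = q / (lam * p 0 * (x + 1))) ∧
    (∀ x : ℕ, Phi lam mu p rneg r φ θq q x / Phi lam mu p rneg r φ θq q 0
      = 1 / (x + 1)) := by
  have hmean_deriv : ∑' k, derivCoeff p k = mu / (q + mu) := (tsum_derivCoeff p).trans hmean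
  have hmean_lt : ∑' k, derivCoeff p k < 1 := by
    rw [hmean_deriv, div_lt_one (by positivity)]
    linarith
  have hderiv : Summable (derivCoeff p) :=
    summable_of_tsum_ne_zero (by rw [hmean_deriv]; positivity)
  have hsum : HasSum p 1 := hpsum ▸ (summable_of_tsum_ne_zero (by simp [hpsum])).hasSum
  obtain rfl := eq_const_mul_derivCoeff _ hp1 hr0 hrdef
  obtain rfl : φ = 1 :=
    eq_one_of_ptilde_eq_self hp hsum hderiv hmean_lt ⟨by linarith, hφ1⟩ hφfix
  obtain rfl : θq = 0 := hθzero (by rw [hrneg, mul_zero])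
  subst hrneg hlameq
  have hnum := fun z (hz : z ∈ Ioo (0 : ℝ) 1) =>
    gamma_numerator_eq_mul_one_sub_deriv (q := q) hmu.ne' hderiv ⟨by linarith [hz.1], hz.2⟩
  have hPhi (x : ℕ) := Phi_eq_of_gamma_numerator_eq hlam.ne' hderiv zero_le_one le_rfl
    (fun w hw => lt_ptilde_of_mean_lt_one hp hsum hderiv hmean_lt ⟨by linarith [hw.1], hw.2⟩)
    hnum x
  simp only [one_pow, mul_one] at hPhi
  refine ⟨?_, rfl, rfl, hnum, hPhi, fun x => ?_⟩
  · rw [tsum_mul_left, hmean_deriv]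
    field_simp
  · simp only [hPhi, Nat.cast_zero, zero_add, mul_one]
    field_simp
end

section
/- Assume condition (E'). Then for every x ∈ ℕ, the double integral ∫_{φ*}^1 v^{x−1} (∫_v^1 dw/(λ(w − p̃(w)))) dv is finite. -/
open MeasureTheory Filter Set

/-!
By Tonelli, `∫_φ^1 ∫_v^1 dw / g(w) dv = ∫_φ^1 (w - φ) / g(w) dw`, where `g(w) = λ (w - p̃(w))` is
concave with `g(φ) = 0`. Concavity makes `(w - φ) / g(w)` nondecreasing, hence bounded on `[φ, c]`
for every `c < 1`, while near `1` it is at most `(1 - φ) / g(w)`, which is integrable by (E').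
-/

section Tonelli

open scoped ENNReal

theorem lintegral_setLIntegral_Ioi {α : Type*} [LinearOrder α] [TopologicalSpace α]
    [OrderClosedTopology α] [SecondCountableTopology α] [MeasurableSpace α]
    [OpensMeasurableSpace α] (μ ν : Measure α) [SFinite μ] [SFinite ν] {f : α → ℝ≥0∞}
    (hf : AEMeasurable f ν) :
    ∫⁻ v, ∫⁻ w in Ioi v, f w ∂ν ∂μ = ∫⁻ w, μ (Iio w) * f w ∂ν := by
  have hmeas : AEMeasurable (Function.uncurry fun v w => (Ioi v).indicator f w) (μ.prod ν) :=
    hf.comp_snd.indicator (measurableSet_lt measurable_fst measurable_snd)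
  calc ∫⁻ v, ∫⁻ w in Ioi v, f w ∂ν ∂μ
      = ∫⁻ v, ∫⁻ w, (Ioi v).indicator f w ∂ν ∂μ := by
        simp only [lintegral_indicator measurableSet_Ioi]
    _ = ∫⁻ w, ∫⁻ v, (Ioi v).indicator f w ∂μ ∂ν := lintegral_lintegral_swap hmeas
    _ = ∫⁻ w, ∫⁻ v, (Iio w).indicator (fun _ => f w) v ∂μ ∂ν := by
        simp only [indicator, mem_Ioi, mem_Iio]
    _ = ∫⁻ w, μ (Iio w) * f w ∂ν := by
        simp only [lintegral_indicator_const measurableSet_Iio, mul_comm]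

theorem setLIntegral_setLIntegral_Ioo {a b : ℝ} {f : ℝ → ℝ≥0∞}
    (hf : AEMeasurable f (volume.restrict (Ioo a b))) :
    ∫⁻ v in Ioo a b, ∫⁻ w in Ioo v b, f w =
      ∫⁻ w in Ioo a b, ENNReal.ofReal (w - a) * f w := by
  calc ∫⁻ v in Ioo a b, ∫⁻ w in Ioo v b, f w
      = ∫⁻ v in Ioo a b, ∫⁻ w in Ioi v, f w ∂(volume.restrict (Ioo a b)) := by
        refine setLIntegral_congr_fun measurableSet_Ioo fun v hv => ?_
        rw [Measure.restrict_restrict measurableSet_Ioi, Ioi_inter_Ioo, sup_eq_left.2 hv.1.le]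
    _ = ∫⁻ w in Ioo a b, volume.restrict (Ioo a b) (Iio w) * f w :=
        lintegral_setLIntegral_Ioi _ _ hf
    _ = ∫⁻ w in Ioo a b, ENNReal.ofReal (w - a) * f w := by
        refine setLIntegral_congr_fun measurableSet_Ioo fun w hw => ?_
        rw [Measure.restrict_apply measurableSet_Iio, Iio_inter_Ioo, inf_eq_left.2 hw.2.le,
          Real.volume_Ioo]

end Tonelli

section Concave

variable {a b c : ℝ} {g : ℝ → ℝ}

theorem monotoneOn_sub_div_of_concaveOn (hg : ConcaveOn ℝ (Ico a b) g) (hga : 0 ≤ g a)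
    (hpos : ∀ w ∈ Ioo a b, 0 < g w) : MonotoneOn (fun w => (w - a) / g w) (Ico a b) := by
  intro x hx y hy hxy
  rcases hx.1.eq_or_lt with rfl | hax
  · simp only [sub_self, zero_div]
    rcases hxy.eq_or_lt with rfl | hay
    · simp
    · exact div_nonneg (sub_nonneg.2 hxy) (hpos y ⟨hay, hy.2⟩).le
  · have hay : a < y := hax.trans_le hxy
    have hslope : (g y - g a) / (y - a) ≤ (g x - g a) / (x - a) := by
      simpa only [slope_def_field] using
        hg.antitoneOn_slope_gt ⟨le_rfl, hx.1.trans_lt hx.2⟩ ⟨hx, hax⟩ ⟨hy, hay⟩ hxy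
    rw [div_le_div_iff₀ (sub_pos.2 hay) (sub_pos.2 hax)] at hslope
    rw [div_le_div_iff₀ (hpos x ⟨hax, hx.2⟩) (hpos y ⟨hay, hy.2⟩)]
    linarith [mul_le_mul_of_nonneg_left hxy hga]

theorem intervalIntegrable_sub_div_of_concaveOn (hg : ConcaveOn ℝ (Ico a b) g) (hga : 0 ≤ g a)
    (hpos : ∀ w ∈ Ioo a b, 0 < g w) (hc : c ∈ Ioo a b)
    (hint : IntervalIntegrable (fun w => 1 / g w) volume c b) :
    IntervalIntegrable (fun w => (w - a) / g w) volume a b := by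
  have hleft : IntervalIntegrable (fun w => (w - a) / g w) volume a c := by
    refine MonotoneOn.intervalIntegrable ?_
    rw [uIcc_of_le hc.1.le]
    exact (monotoneOn_sub_div_of_concaveOn hg hga hpos).mono (Icc_subset_Ico_right hc.2)
  have hright : IntervalIntegrable (fun w => (w - a) / g w) volume c b := by
    simpa only [mul_one_div] using
      hint.continuousOn_mul (g := fun w => w - a) (by fun_prop)
  exact hleft.trans hright

theorem aemeasurable_one_div_of_concaveOn (hg : ConcaveOn ℝ (Ico a b) g)
    (hpos : ∀ w ∈ Ioo a b, 0 < g w) :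
    AEMeasurable (fun w => 1 / g w) (volume.restrict (Ioo a b)) := by
  have hcont : ContinuousOn g (Ioo a b) := interior_Ico (a := a) (b := b) ▸ hg.continuousOn_interior
  exact (continuousOn_const.div hcont fun w hw => (hpos w hw).ne').aemeasurable measurableSet_Ioo

theorem setLIntegral_setLIntegral_one_div_lt_top (hg : ConcaveOn ℝ (Ico a b) g) (hga : 0 ≤ g a)
    (hpos : ∀ w ∈ Ioo a b, 0 < g w) (hc : c ∈ Ioo a b)
    (hint : IntervalIntegrable (fun w => 1 / g w) volume c b) :
    ∫⁻ v in Ioo a b, ∫⁻ w in Ioo v b, ENNReal.ofReal (1 / g w) < ⊤ := by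
  have hweighted : IntegrableOn (fun w => (w - a) / g w) (Ioo a b) :=
    (intervalIntegrable_iff_integrableOn_Ioo_of_le (hc.1.trans hc.2).le).1
      (intervalIntegrable_sub_div_of_concaveOn hg hga hpos hc hint)
  calc ∫⁻ v in Ioo a b, ∫⁻ w in Ioo v b, ENNReal.ofReal (1 / g w)
      = ∫⁻ w in Ioo a b, ENNReal.ofReal (w - a) * ENNReal.ofReal (1 / g w) :=
        setLIntegral_setLIntegral_Ioo (aemeasurable_one_div_of_concaveOn hg hpos).ennreal_ofReal
    _ = ∫⁻ w in Ioo a b, ENNReal.ofReal ((w - a) / g w) := by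
        refine setLIntegral_congr_fun measurableSet_Ioo fun w hw => ?_
        rw [← ENNReal.ofReal_mul (sub_nonneg.2 hw.1.le), mul_one_div]
    _ < ⊤ := hweighted.lintegral_lt_top

end Concave

section GeneratingFunction

variable {p : ℕ → ℝ}

theorem summable_mul_pow_of_mem_Icc (hp : ∀ k, 0 ≤ p k) (hsum : Summable p) {z : ℝ}
    (hz : z ∈ Icc (0 : ℝ) 1) : Summable fun k => p k * z ^ k :=
  hsum.of_nonneg_of_le (fun k => mul_nonneg (hp k) (pow_nonneg hz.1 k)) fun k =>
    mul_le_of_le_one_right (hp k) (pow_le_one₀ hz.1 hz.2)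

theorem convexOn_ptilde (hp : ∀ k, 0 ≤ p k) (hsum : Summable p) :
    ConvexOn ℝ (Icc 0 1) (ptilde p) := by
  refine ⟨convex_Icc 0 1, fun x hx y hy s t hs ht hst => ?_⟩
  have hsx := (summable_mul_pow_of_mem_Icc hp hsum hx).mul_left s
  have hsy := (summable_mul_pow_of_mem_Icc hp hsum hy).mul_left t
  have hsxy := summable_mul_pow_of_mem_Icc hp hsum (convex_Icc 0 1 hx hy hs ht hst)
  have hterm (k : ℕ) :
      p k * (s • x + t • y) ^ k ≤ s * (p k * x ^ k) + t * (p k * y ^ k) := by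
    have hpow := ((convexOn_pow (𝕜 := ℝ) k).smul (hp k)).2 hx.1 hy.1 hs ht hst
    simpa only [smul_eq_mul] using hpow
  calc ptilde p (s • x + t • y)
      ≤ ∑' k, (s * (p k * x ^ k) + t * (p k * y ^ k)) :=
        hsxy.tsum_le_tsum hterm (hsx.add hsy)
    _ = s • ptilde p x + t • ptilde p y := by
        simp only [hsx.tsum_add hsy, tsum_mul_left, ptilde, smul_eq_mul]

end GeneratingFunction

theorem stmt13_general {lam : ℝ} {p : ℕ → ℝ} {φ : ℝ} (hlam : 0 < lam) (hp : ∀ k, 0 ≤ p k)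
    (hsum : Summable p) (hφ0 : 0 ≤ φ) (hφfix : ptilde p φ = φ)
    (hφhi : ∀ z : ℝ, φ < z → z < 1 → ptilde p z < z) (hE : CondE p φ) (n : ℕ) :
    ∫⁻ v in Ioo φ 1, ENNReal.ofReal (v ^ n) *
      ∫⁻ w in Ioo v 1, ENNReal.ofReal (1 / (lam * (w - ptilde p w))) < ⊤ := by
  obtain ⟨c, hφc, hc1, hint⟩ := hE
  have hconcave : ConcaveOn ℝ (Ico φ 1) fun w => lam * (w - ptilde p w) := by
    have hconvex := (convexOn_ptilde hp hsum).subset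
      (Ico_subset_Icc_self.trans (Icc_subset_Icc_left hφ0)) (convex_Ico φ 1)
    exact ((concaveOn_id hconvex.1).sub hconvex).smul hlam.le
  have hpos : ∀ w ∈ Ioo φ 1, 0 < lam * (w - ptilde p w) := fun w hw =>
    mul_pos hlam (sub_pos.2 (hφhi w hw.1 hw.2))
  have hint_lam : IntervalIntegrable (fun w => 1 / (lam * (w - ptilde p w))) volume c 1 := by
    simpa only [one_div_mul_one_div] using hint.const_mul (1 / lam)
  have hpow : ∀ v ∈ Ioo φ 1, ENNReal.ofReal (v ^ n) ≤ 1 := fun v hv =>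
    ENNReal.ofReal_le_one.2 (pow_le_one₀ (hφ0.trans hv.1.le) hv.2.le)
  calc _ ≤ ∫⁻ v in Ioo φ 1, ∫⁻ w in Ioo v 1, ENNReal.ofReal (1 / (lam * (w - ptilde p w))) :=
        setLIntegral_mono' measurableSet_Ioo fun v hv => mul_le_of_le_one_left' (hpow v hv)
    _ < ⊤ := setLIntegral_setLIntegral_one_div_lt_top hconcave (by simp [hφfix]) hpos
        ⟨hφc, hc1⟩ hint_lam

/-- under condition (E'), for every `x ∈ ℕ` (`x ≥ 1`) the double integral
`∫_{φ*}^1 v^{x-1} (∫_v^1 dw/(λ(w - p̃(w)))) dv` is finite. -/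
theorem stmt13 (lam : ℝ) (p : ℕ → ℝ) (φ : ℝ)
    (hlam : 0 < lam)
    (hp : ∀ k, 0 ≤ p k) (hpsum : ∑' k, p k = 1) (hp0 : 0 < p 0) (hp1 : p 1 = 0)
    (hφ0 : 0 < φ) (hφ1 : φ ≤ 1) (hφfix : ptilde p φ = φ)
    (hφlo : ∀ z : ℝ, 0 < z → z < φ → z < ptilde p z)
    (hφhi : ∀ z : ℝ, φ < z → z < 1 → ptilde p z < z)
    (hE : CondE p φ) :
    ∀ x : ℕ, 1 ≤ x →
      (∫⁻ v in Set.Ioo φ 1, ENNReal.ofReal (v ^ (x - 1)) *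
        ∫⁻ w in Set.Ioo v 1, ENNReal.ofReal (1 / (lam * (w - ptilde p w)))) < ⊤ := by
  have hsum : Summable p := by_contra fun h => by simp [tsum_eq_zero_of_not_summable h] at hpsum
  exact fun x _ => stmt13_general hlam hp hsum hφ0.le hφfix hφhi hE (x - 1)
end
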